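/- arXiv:1903.12154 — 5 statements merged into one kernel-verified Lean document; each statement's English description precedes it below -/
import Mathlib

section
/- For any two classical-device states P1 and P2 over the same finite sets B, A1, X1, the non-signaling norm distance has the closed form ||P1 - P2||_NS = (1/2) * sum over b in B of max over x1 in X1 of sum over a1 in A1 of |P1(b,a1|x1) - P2(b,a1|x1)|. -/
/-- A forward wiring (with its own dice) acting on the device part of a c-d state:
the dice has output set `Fin nA2`, input set `Fin nX2`; `f` feeds the device's output
and input into the dice input, `g` post-processes into the new output alphabet `A1'`. -/
structure FwdWire (A1 X1 A1' : Type) [Fintype A1] [Fintype X1] [Fintype A1'] where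
  nA2 : ℕ
  nX2 : ℕ
  D : Fin nA2 → Fin nX2 → ℝ
  D_nonneg : ∀ a2 x2, 0 ≤ D a2 x2
  D_sum : ∀ x2, ∑ a2, D a2 x2 = 1
  f : A1 → X1 → Fin nX2
  g : A1 → Fin nA2 → X1 → A1'

noncomputable def FwdWire.apply {A1 X1 A1' : Type} [Fintype A1] [Fintype X1] [Fintype A1']
    [DecidableEq A1'] (W : FwdWire A1 X1 A1') (Pb : A1 → X1 → ℝ) : A1' → X1 → ℝ :=
  fun a1' x1 => ∑ a1, ∑ a2, if W.g a1 a2 x1 = a1' then Pb a1 x1 * W.D a2 (W.f a1 x1) else 0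

/-- A backward wiring (with its own dice): the dice input set is `X1` itself,
its output is fed (via `f`) into the input of the device. -/
structure BackWire (A1 X1 A1' : Type) [Fintype A1] [Fintype X1] [Fintype A1'] where
  nA2 : ℕ
  D : Fin nA2 → X1 → ℝ
  D_nonneg : ∀ a2 x1, 0 ≤ D a2 x1
  D_sum : ∀ x1, ∑ a2, D a2 x1 = 1
  f : Fin nA2 → X1 → X1
  g : A1 → Fin nA2 → X1 → A1'

noncomputable def BackWire.apply {A1 X1 A1' : Type} [Fintype A1] [Fintype X1] [Fintype A1']
    [DecidableEq A1'] (W : BackWire A1 X1 A1') (Pb : A1 → X1 → ℝ) : A1' → X1 → ℝ :=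
  fun a1' x1 => ∑ a1, ∑ a2, if W.g a1 a2 x1 = a1' then Pb a1 (W.f a2 x1) * W.D a2 x1 else 0

/-- A pure distinguishing operation on c-d states over `B, A1, X1`, with output
alphabet `Fin nC`: for each `b` either a forward or a backward wiring, followed by a
general measurement `w b` (a distribution on the inputs `X1`) and a stochastic
post-processing `L` of `(b, a1')` into the final outcome `c`. -/
structure PureOp (B A1 X1 : Type) [Fintype B] [Fintype A1] [Fintype X1] (nC : ℕ) where
  nA1' : ℕ
  wire : B → FwdWire A1 X1 (Fin nA1') ⊕ BackWire A1 X1 (Fin nA1')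
  w : B → X1 → ℝ
  w_nonneg : ∀ b x1, 0 ≤ w b x1
  w_sum : ∀ b, ∑ x1, w b x1 = 1
  L : Fin nC → B → Fin nA1' → ℝ
  L_nonneg : ∀ c b a1', 0 ≤ L c b a1'
  L_sum : ∀ b a1', ∑ c, L c b a1' = 1

/-- The output distribution of a pure distinguishing operation applied to a c-d state. -/
noncomputable def PureOp.out {B A1 X1 : Type} [Fintype B] [Fintype A1] [Fintype X1] {nC : ℕ}
    (G : PureOp B A1 X1 nC) (P : B → A1 → X1 → ℝ) : Fin nC → ℝ :=
  fun c => ∑ b, ∑ a1' : Fin G.nA1', ∑ x1,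
    G.L c b a1' * G.w b x1 *
      (Sum.elim (fun W => FwdWire.apply W (P b)) (fun W => BackWire.apply W (P b))
        (G.wire b) a1' x1)

/-- A classical-device (c-d) state: nonnegative, normalized for each input, and
non-signaling from the device input to the classical part. -/
def IsCDState {B A1 X1 : Type} [Fintype B] [Fintype A1] [Fintype X1]
    (P : B → A1 → X1 → ℝ) : Prop :=
  (∀ b a1 x1, 0 ≤ P b a1 x1) ∧
  (∀ x1, ∑ b, ∑ a1, P b a1 x1 = 1) ∧
  (∀ b x1 x1', ∑ a1, P b a1 x1 = ∑ a1, P b a1 x1')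

/-- The non-signaling norm distance between two c-d states: the supremum, over all finite
convex combinations of pure distinguishing operations, of half the total variational
distance of the output distributions. -/
noncomputable def nsNormCD {B A1 X1 : Type} [Fintype B] [Fintype A1] [Fintype X1]
    (P1 P2 : B → A1 → X1 → ℝ) : ℝ :=
  sSup { r : ℝ | ∃ (nC m : ℕ) (lam : Fin m → ℝ) (gs : Fin m → PureOp B A1 X1 nC),
    (∀ i, 0 ≤ lam i) ∧ (∑ i, lam i = 1) ∧
    r = (1/2) * ∑ c, |(∑ i, lam i * (gs i).out P1 c) - (∑ i, lam i * (gs i).out P2 c)| }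

/-!
The output distribution is linear in the state, so only the difference `P = P1 - P2` matters.
Its `ℓ¹` size is controlled stage by stage. A forward wiring applies a stochastic matrix to the
device output at each fixed input. A backward wiring and the measurement take convex combinations
over device inputs, so for each `b` they cannot exceed the largest `ℓ¹` norm over inputs.
Post-processing is again a stochastic matrix, now on pairs `(b, a1')`, and mixing operations is a
convex combination. The bound is attained by measuring, for each `b`, an input with the largest
`ℓ¹` norm and announcing the sign of `P b a1`.
-/

section OrderedGroup

variable {ι κ M : Type*} [Fintype ι] [Fintype κ] [AddCommGroup M] [LinearOrder M]
  [IsOrderedAddMonoid M]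

lemma sum_abs_sum_le_sum_sum_abs (f : κ → ι → M) : ∑ k, |∑ i, f k i| ≤ ∑ i, ∑ k, |f k i| :=
  (Finset.sum_le_sum fun _ _ => Finset.abs_sum_le_sum_abs _ _).trans_eq Finset.sum_comm

lemma sum_abs_sum_ite_sign (v : ι → M) :
    ∑ c : Fin 2, |∑ i, if (if 0 ≤ v i then 0 else 1) = c then v i else 0| = ∑ i, |v i| := by
  have announce_zero (i : ι) : (if (if 0 ≤ v i then (0 : Fin 2) else 1) = 0 then v i else 0) =
      (v i)⁺ := by
    rcases le_or_gt 0 (v i) with h | h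
    · simp [h]
    · simp [h.not_ge, posPart_of_nonpos h.le]
  have announce_one (i : ι) : (if (if 0 ≤ v i then (0 : Fin 2) else 1) = 1 then v i else 0) =
      -(v i)⁻ := by
    rcases le_or_gt 0 (v i) with h | h
    · simp [h]
    · simp [h.not_ge, negPart_of_nonpos h.le]
  simp only [Fin.sum_univ_two, announce_zero, announce_one, Finset.sum_neg_distrib, abs_neg]
  rw [abs_of_nonneg (Finset.sum_nonneg fun i _ => posPart_nonneg (v i)),
    abs_of_nonneg (Finset.sum_nonneg fun i _ => negPart_nonneg (v i)), ← Finset.sum_add_distrib]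
  simp only [posPart_add_negPart]

end OrderedGroup

section StochasticMaps

variable {ι κ R : Type*} [Fintype ι] [Fintype κ] [Ring R] [LinearOrder R] [IsOrderedRing R]

lemma sum_abs_sum_mul_le_of_stochastic {K : κ → ι → R}
    (hK : ∀ i, (fun k => K k i) ∈ stdSimplex R κ) (v : ι → R) :
    ∑ k, |∑ i, K k i * v i| ≤ ∑ i, |v i| :=
  calc
    ∑ k, |∑ i, K k i * v i| ≤ ∑ i, ∑ k, |K k i * v i| := sum_abs_sum_le_sum_sum_abs _
    _ = ∑ i, |v i| := Finset.sum_congr rfl fun i _ => by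
      simp only [abs_mul, abs_of_nonneg ((hK i).1 _), ← Finset.sum_mul, (hK i).2, one_mul]

lemma sum_abs_convexCombination_le {w : ι → R} (hw : w ∈ stdSimplex R ι) {u : ι → κ → R} {M : R}
    (hu : ∀ i, ∑ k, |u i k| ≤ M) : ∑ k, |∑ i, w i * u i k| ≤ M :=
  calc
    ∑ k, |∑ i, w i * u i k| ≤ ∑ i, ∑ k, |w i * u i k| := sum_abs_sum_le_sum_sum_abs _
    _ = ∑ i, w i * ∑ k, |u i k| := by
      simp only [abs_mul, abs_of_nonneg (hw.1 _), Finset.mul_sum]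
    _ ≤ ∑ i, w i * M := Finset.sum_le_sum fun i _ => mul_le_mul_of_nonneg_left (hu i) (hw.1 i)
    _ = M := by rw [← Finset.sum_mul, hw.2, one_mul]

end StochasticMaps

section DeviceNorm

variable {A1 X1 : Type*} [Fintype A1] [Fintype X1] [Nonempty X1]

/-- The largest `ℓ¹` norm, over device inputs, of the device part `v` of a difference of c-d
states. Since `v` is unnormalized, this already carries the weight of the classical value `b`. -/
noncomputable def deviceNorm (v : A1 → X1 → ℝ) : ℝ :=
  Finset.univ.sup' Finset.univ_nonempty fun x => ∑ a, |v a x|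

lemma sum_abs_le_deviceNorm (v : A1 → X1 → ℝ) (x : X1) : ∑ a, |v a x| ≤ deviceNorm v :=
  Finset.le_sup' (fun x => ∑ a, |v a x|) (Finset.mem_univ x)

lemma exists_deviceNorm_eq_sum_abs (v : A1 → X1 → ℝ) : ∃ x, deviceNorm v = ∑ a, |v a x| := by
  obtain ⟨x, -, hx⟩ := Finset.exists_mem_eq_sup' Finset.univ_nonempty fun x => ∑ a, |v a x|
  exact ⟨x, hx⟩

end DeviceNorm

section Wirings

variable {A1 X1 A1' : Type} [Fintype A1] [Fintype X1] [Fintype A1']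

/-- The forward wiring that relabels the device output by `d`, rolling a one-sided dice. -/
def FwdWire.relabel (d : A1 → A1') : FwdWire A1 X1 A1' where
  nA2 := 1
  nX2 := 1
  D := fun _ _ => 1
  D_nonneg := fun _ _ => zero_le_one
  D_sum := fun _ => by simp
  f := fun _ _ => 0
  g := fun a _ _ => d a

variable [DecidableEq A1']

lemma FwdWire.relabel_apply (d : A1 → A1') (v : A1 → X1 → ℝ) (a' : A1') (x : X1) :
    (FwdWire.relabel d).apply v a' x = ∑ a, if d a = a' then v a x else 0 := by
  change ∑ a, ∑ _ : Fin 1, (if d a = a' then v a x * 1 else 0) = _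
  simp

/-- The probability that a forward wiring turns device output `a` into `a'` at device input `x`. -/
noncomputable def FwdWire.kernel (W : FwdWire A1 X1 A1') (x : X1) (a' : A1') (a : A1) : ℝ :=
  ∑ a2, if W.g a a2 x = a' then W.D a2 (W.f a x) else 0

lemma FwdWire.kernel_mem_stdSimplex (W : FwdWire A1 X1 A1') (x : X1) (a : A1) :
    (fun a' => W.kernel x a' a) ∈ stdSimplex ℝ A1' := by
  refine ⟨fun a' => Finset.sum_nonneg fun a2 _ => ?_, ?_⟩
  · exact ite_nonneg (W.D_nonneg _ _) le_rfl
  · simp only [FwdWire.kernel]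
    rw [Finset.sum_comm]
    simp [W.D_sum]

lemma FwdWire.apply_eq_sum_kernel (W : FwdWire A1 X1 A1') (v : A1 → X1 → ℝ) (a' : A1') (x : X1) :
    W.apply v a' x = ∑ a, W.kernel x a' a * v a x := by
  simp only [FwdWire.apply, FwdWire.kernel, Finset.sum_mul, ite_mul, zero_mul]
  simp only [mul_comm]

lemma FwdWire.apply_sub (W : FwdWire A1 X1 A1') (v w : A1 → X1 → ℝ) :
    W.apply (v - w) = W.apply v - W.apply w := by
  ext a' x
  simp only [FwdWire.apply_eq_sum_kernel, Pi.sub_apply, mul_sub, Finset.sum_sub_distrib]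

lemma FwdWire.sum_abs_apply_le (W : FwdWire A1 X1 A1') (v : A1 → X1 → ℝ) (x : X1) :
    ∑ a', |W.apply v a' x| ≤ ∑ a, |v a x| := by
  simp only [FwdWire.apply_eq_sum_kernel]
  exact sum_abs_sum_mul_le_of_stochastic (W.kernel_mem_stdSimplex x) _

lemma BackWire.apply_eq_sum_dice (W : BackWire A1 X1 A1') (v : A1 → X1 → ℝ) (a' : A1') (x : X1) :
    W.apply v a' x =
      ∑ a2, W.D a2 x * ∑ a, (if W.g a a2 x = a' then 1 else 0) * v a (W.f a2 x) := by
  simp only [BackWire.apply, Finset.mul_sum, ite_mul, mul_ite, one_mul, zero_mul, mul_zero]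
  rw [Finset.sum_comm]
  simp only [mul_comm]

lemma BackWire.apply_sub (W : BackWire A1 X1 A1') (v w : A1 → X1 → ℝ) :
    W.apply (v - w) = W.apply v - W.apply w := by
  ext a' x
  simp only [BackWire.apply_eq_sum_dice, Pi.sub_apply, mul_sub, Finset.sum_sub_distrib]

lemma BackWire.sum_abs_apply_le [Nonempty X1] (W : BackWire A1 X1 A1') (v : A1 → X1 → ℝ)
    (x : X1) : ∑ a', |W.apply v a' x| ≤ deviceNorm v := by
  simp only [BackWire.apply_eq_sum_dice]
  refine sum_abs_convexCombination_le ⟨fun a2 => W.D_nonneg a2 x, W.D_sum x⟩ fun a2 => ?_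
  exact (sum_abs_sum_mul_le_of_stochastic (fun a => ite_eq_mem_stdSimplex ℝ (W.g a a2 x)) _).trans
    (sum_abs_le_deviceNorm v (W.f a2 x))

end Wirings

section PureOperations

variable {B A1 X1 : Type} [Fintype B] [Fintype A1] [Fintype X1] {nC : ℕ}

/-- The state `Pw` obtained from `P` by the wirings of a pure operation, before measurement. -/
noncomputable def PureOp.wired (G : PureOp B A1 X1 nC) (P : B → A1 → X1 → ℝ) (b : B) :
    Fin G.nA1' → X1 → ℝ :=
  Sum.elim (fun W => W.apply (P b)) (fun W => W.apply (P b)) (G.wire b)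

lemma PureOp.wired_sub (G : PureOp B A1 X1 nC) (P Q : B → A1 → X1 → ℝ) (b : B) :
    G.wired (P - Q) b = G.wired P b - G.wired Q b := by
  unfold PureOp.wired
  rcases G.wire b with W | W
  · exact W.apply_sub (P b) (Q b)
  · exact W.apply_sub (P b) (Q b)

lemma PureOp.sum_abs_wired_le [Nonempty X1] (G : PureOp B A1 X1 nC) (P : B → A1 → X1 → ℝ) (b : B)
    (x : X1) : ∑ a', |G.wired P b a' x| ≤ deviceNorm (P b) := by
  unfold PureOp.wired
  rcases G.wire b with W | W
  · exact (W.sum_abs_apply_le (P b) x).trans (sum_abs_le_deviceNorm (P b) x)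
  · exact W.sum_abs_apply_le (P b) x

lemma PureOp.out_eq_sum_prod (G : PureOp B A1 X1 nC) (P : B → A1 → X1 → ℝ) (c : Fin nC) :
    G.out P c =
      ∑ p : B × Fin G.nA1', G.L c p.1 p.2 * ∑ x, G.w p.1 x * G.wired P p.1 p.2 x := by
  simp only [Fintype.sum_prod_type, Finset.mul_sum, ← mul_assoc]
  rfl

lemma PureOp.out_sub (G : PureOp B A1 X1 nC) (P Q : B → A1 → X1 → ℝ) :
    G.out (P - Q) = G.out P - G.out Q := by
  ext c
  simp only [PureOp.out_eq_sum_prod, PureOp.wired_sub, Pi.sub_apply, mul_sub,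
    Finset.sum_sub_distrib]

lemma PureOp.sum_abs_out_le [Nonempty X1] (G : PureOp B A1 X1 nC) (P : B → A1 → X1 → ℝ) :
    ∑ c, |G.out P c| ≤ ∑ b, deviceNorm (P b) := by
  have postprocessing_le : ∑ c, |G.out P c| ≤
      ∑ p : B × Fin G.nA1', |∑ x, G.w p.1 x * G.wired P p.1 p.2 x| := by
    simp only [PureOp.out_eq_sum_prod]
    exact sum_abs_sum_mul_le_of_stochastic
      (fun p : B × Fin G.nA1' => ⟨fun c => G.L_nonneg c p.1 p.2, G.L_sum p.1 p.2⟩) _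
  have measurement_le (b : B) :
      ∑ a', |∑ x, G.w b x * G.wired P b a' x| ≤ deviceNorm (P b) :=
    sum_abs_convexCombination_le ⟨G.w_nonneg b, G.w_sum b⟩ (G.sum_abs_wired_le P b)
  rw [Fintype.sum_prod_type] at postprocessing_le
  exact postprocessing_le.trans (Finset.sum_le_sum fun b _ => measurement_le b)

/-- The deterministic test that measures the device at input `x b` and announces `d b a1`. -/
noncomputable def PureOp.announce [DecidableEq X1] (x : B → X1) (d : B → A1 → Fin nC) :
    PureOp B A1 X1 nC where
  nA1' := nC
  wire := fun b => Sum.inl (FwdWire.relabel (d b))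
  w := fun b => Pi.single (x b) 1
  w_nonneg := fun b => (single_mem_stdSimplex ℝ (x b)).1
  w_sum := fun b => (single_mem_stdSimplex ℝ (x b)).2
  L := fun c _ a' => if a' = c then 1 else 0
  L_nonneg := fun c _ a' => (ite_eq_mem_stdSimplex ℝ a').1 c
  L_sum := fun _ a' => (ite_eq_mem_stdSimplex ℝ a').2

lemma PureOp.announce_out [DecidableEq X1] (x : B → X1) (d : B → A1 → Fin nC)
    (P : B → A1 → X1 → ℝ) (c : Fin nC) :
    (PureOp.announce x d).out P c = ∑ b, ∑ a, if d b a = c then P b a (x b) else 0 := by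
  change ∑ b, ∑ a' : Fin nC, ∑ x1, (if a' = c then 1 else 0) * (Pi.single (x b) 1 : X1 → ℝ) x1 *
    (FwdWire.relabel (d b)).apply (P b) a' x1 = _
  simp [FwdWire.relabel_apply, Pi.single_apply]

lemma PureOp.exists_sum_abs_out_eq [Nonempty X1] (P : B → A1 → X1 → ℝ) :
    ∃ G : PureOp B A1 X1 2, ∑ c, |G.out P c| = ∑ b, deviceNorm (P b) := by
  classical
  choose x hx using fun b => exists_deviceNorm_eq_sum_abs (P b)
  refine ⟨PureOp.announce x fun b a => if 0 ≤ P b a (x b) then 0 else 1, ?_⟩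
  simp only [PureOp.announce_out, hx, ← Fintype.sum_prod_type']
  exact sum_abs_sum_ite_sign fun p : B × A1 => P p.1 p.2 (x p.1)

lemma PureOp.sum_abs_mixture_sub_le [Nonempty X1] {ι : Type*} [Fintype ι] {lam : ι → ℝ}
    (hlam : lam ∈ stdSimplex ℝ ι) (gs : ι → PureOp B A1 X1 nC) (P Q : B → A1 → X1 → ℝ) :
    ∑ c, |∑ i, lam i * (gs i).out P c - ∑ i, lam i * (gs i).out Q c| ≤
      ∑ b, deviceNorm ((P - Q) b) := by
  simp only [← Finset.sum_sub_distrib, ← mul_sub, ← Pi.sub_apply, ← PureOp.out_sub]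
  exact sum_abs_convexCombination_le hlam fun i => (gs i).sum_abs_out_le (P - Q)

end PureOperations

theorem nsNormCD_closed_form_general {B A1 X1 : Type} [Fintype B] [Fintype A1] [Fintype X1]
    [Nonempty X1] (P1 P2 : B → A1 → X1 → ℝ) :
    nsNormCD P1 P2 =
      (1/2) * ∑ b, Finset.univ.sup' Finset.univ_nonempty
        (fun x1 => ∑ a1, |P1 b a1 x1 - P2 b a1 x1|) := by
  change nsNormCD P1 P2 = (1/2) * ∑ b, deviceNorm ((P1 - P2) b)
  refine IsGreatest.csSup_eq ⟨?_, ?_⟩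
  · obtain ⟨G, hG⟩ := PureOp.exists_sum_abs_out_eq (P1 - P2)
    refine ⟨2, 1, fun _ => 1, fun _ => G, fun _ => zero_le_one, by simp, ?_⟩
    rw [← hG]
    simp only [PureOp.out_sub, Pi.sub_apply, Finset.univ_unique, Finset.sum_singleton, one_mul]
  · rintro _ ⟨nC, m, lam, gs, hlam_nonneg, hlam_sum, rfl⟩
    have mixture_le := PureOp.sum_abs_mixture_sub_le ⟨hlam_nonneg, hlam_sum⟩ gs P1 P2
    gcongr

/-- The NS norm of the difference of two c-d states has the closed form
`(1/2) ∑_b max_{x1} ∑_{a1} |P1(b,a1|x1) − P2(b,a1|x1)|`. -/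
theorem nsNormCD_closed_form {B A1 X1 : Type} [Fintype B] [Fintype A1] [Fintype X1]
    [Nonempty X1] (P1 P2 : B → A1 → X1 → ℝ) (h1 : IsCDState P1) (h2 : IsCDState P2) :
    nsNormCD P1 P2 =
      (1/2) * ∑ b, Finset.univ.sup' Finset.univ_nonempty
        (fun x1 => ∑ a1, |P1 b a1 x1 - P2 b a1 x1|) := by
  exact nsNormCD_closed_form_general P1 P2
end

section
/- Forward-wiring bound: for any two classical-device states P1, P2 over finite sets B, A1, X1, any dice D(a2|x2,b), any families of deterministic forward-wiring functions {f_b : A1 x X1 -> X2}, {g_b : A1 x A2 x X1 -> A1'}, any fixed b in B, and any probability distribution w on X1 (a general measurement), one has: sum over a1' of | sum over x1 of w(x1) * (Pw1(b,a1'|x1) - Pw2(b,a1'|x1)) | <= max over x1 in X1 of sum over a1 in A1 of |P1(b,a1|x1) - P2(b,a1|x1)|, where Pwi(b,a1'|x1) := sum over (a1,a2) with g_b(a1,a2,x1) = a1' of Pi(b,a1|x1) * D(a2|f_b(a1,x1),b) for i = 1,2. -/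
/-!
For a fixed input `x1`, the wired state is the push-forward under `g` of the joint weight
`P(a1|x1) D(a2|f(a1,x1))`, and it is linear in `P`. Appending the output of the dice does not
increase the `ℓ¹`-norm of a signed weight, and neither does pushing it forward, so the wiring
contracts the variational distance input by input; averaging over inputs is then controlled by the
worst one.
-/

section SumAbs

variable {ι κ : Type*}

theorem sum_abs_sum_fiber_le_sum_abs {M : Type*} [AddCommGroup M] [LinearOrder M]
    [IsOrderedAddMonoid M] [Fintype κ] [DecidableEq κ] (s : Finset ι) (g : ι → κ) (u : ι → M) :
    ∑ k, |∑ i ∈ s with g i = k, u i| ≤ ∑ i ∈ s, |u i| :=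
  calc ∑ k, |∑ i ∈ s with g i = k, u i|
    _ ≤ ∑ k, ∑ i ∈ s with g i = k, |u i| :=
      Finset.sum_le_sum fun _ _ => Finset.abs_sum_le_sum_abs _ _
    _ = ∑ i ∈ s, |u i| := Finset.sum_fiberwise s g _

theorem sum_abs_sum_mul_le {R : Type*} [Ring R] [LinearOrder R] [IsOrderedRing R]
    (s : Finset ι) (t : Finset κ) (w : ι → R) (v : ι → κ → R) :
    ∑ k ∈ t, |∑ i ∈ s, w i * v i k| ≤ ∑ i ∈ s, |w i| * ∑ k ∈ t, |v i k| :=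
  calc ∑ k ∈ t, |∑ i ∈ s, w i * v i k|
    _ ≤ ∑ k ∈ t, ∑ i ∈ s, |w i * v i k| :=
      Finset.sum_le_sum fun _ _ => Finset.abs_sum_le_sum_abs _ _
    _ = ∑ i ∈ s, ∑ k ∈ t, |w i * v i k| := Finset.sum_comm
    _ = ∑ i ∈ s, |w i| * ∑ k ∈ t, |v i k| := by simp only [abs_mul, Finset.mul_sum]

end SumAbs

section ForwardWiring

variable {A1 X1 A2 X2 A1' R : Type*} [Fintype A1] [Fintype A2] [DecidableEq A1']

/-- The forward wiring of a device `P(a1|x1)` into a dice `D(a2|x2)`: the dice receives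
`x2 = f(a1,x1)`, and the output of the wired device is `g(a1,a2,x1)`. The classical outcome `b` of
a c-d state is fixed throughout a wiring and therefore does not appear. -/
def forwardWiring [NonUnitalNonAssocSemiring R] (D : A2 → X2 → R) (f : A1 → X1 → X2)
    (g : A1 → A2 → X1 → A1') (P : A1 → X1 → R) (a1' : A1') (x1 : X1) : R :=
  ∑ a1, ∑ a2, if g a1 a2 x1 = a1' then P a1 x1 * D a2 (f a1 x1) else 0

theorem forwardWiring_eq_sum_fiber [NonUnitalNonAssocSemiring R] (D : A2 → X2 → R)
    (f : A1 → X1 → X2) (g : A1 → A2 → X1 → A1') (P : A1 → X1 → R) (a1' : A1') (x1 : X1) :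
    forwardWiring D f g P a1' x1 =
      ∑ a : A1 × A2 with g a.1 a.2 x1 = a1', P a.1 x1 * D a.2 (f a.1 x1) := by
  rw [Finset.sum_filter, Fintype.sum_prod_type, forwardWiring]

theorem forwardWiring_sub [NonUnitalNonAssocRing R] (D : A2 → X2 → R) (f : A1 → X1 → X2)
    (g : A1 → A2 → X1 → A1') (P Q : A1 → X1 → R) :
    forwardWiring D f g (P - Q) = forwardWiring D f g P - forwardWiring D f g Q := by
  ext a1' x1
  simp only [forwardWiring_eq_sum_fiber, Pi.sub_apply, sub_mul, Finset.sum_sub_distrib]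

variable [Fintype A1'] [Ring R] [LinearOrder R] [IsOrderedRing R]

theorem sum_abs_forwardWiring_le {D : A2 → X2 → R} (hD : ∀ x2, ∑ a2, |D a2 x2| ≤ 1)
    (f : A1 → X1 → X2) (g : A1 → A2 → X1 → A1') (P : A1 → X1 → R) (x1 : X1) :
    ∑ a1', |forwardWiring D f g P a1' x1| ≤ ∑ a1, |P a1 x1| :=
  calc ∑ a1', |forwardWiring D f g P a1' x1|
    _ ≤ ∑ a : A1 × A2, |P a.1 x1 * D a.2 (f a.1 x1)| := by
      simp only [forwardWiring_eq_sum_fiber]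
      exact sum_abs_sum_fiber_le_sum_abs _ _ _
    _ = ∑ a1, |P a1 x1| * ∑ a2, |D a2 (f a1 x1)| := by
      simp only [Fintype.sum_prod_type, abs_mul, Finset.mul_sum]
    _ ≤ ∑ a1, |P a1 x1| :=
      Finset.sum_le_sum fun _ _ => mul_le_of_le_one_right (abs_nonneg _) (hD _)

theorem sum_abs_forwardWiring_sub_le {D : A2 → X2 → R} (hD : ∀ x2, ∑ a2, |D a2 x2| ≤ 1)
    (f : A1 → X1 → X2) (g : A1 → A2 → X1 → A1') (P Q : A1 → X1 → R) (x1 : X1) :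
    ∑ a1', |forwardWiring D f g P a1' x1 - forwardWiring D f g Q a1' x1| ≤
      ∑ a1, |P a1 x1 - Q a1 x1| := by
  simpa only [forwardWiring_sub, Pi.sub_apply] using sum_abs_forwardWiring_le hD f g (P - Q) x1

theorem forward_wiring_bound_general [Fintype X1] [Nonempty X1] (P1 P2 : A1 → X1 → R)
    {D : A2 → X2 → R} (hD : ∀ x2, ∑ a2, |D a2 x2| ≤ 1) (f : A1 → X1 → X2)
    (g : A1 → A2 → X1 → A1') {w : X1 → R} (hw : ∑ x1, |w x1| ≤ 1) :
    ∑ a1', |∑ x1, w x1 * (forwardWiring D f g P1 a1' x1 - forwardWiring D f g P2 a1' x1)| ≤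
      Finset.univ.sup' Finset.univ_nonempty (fun x1 => ∑ a1, |P1 a1 x1 - P2 a1 x1|) := by
  set distance : X1 → R := fun x1 => ∑ a1, |P1 a1 x1 - P2 a1 x1|
  set maxDistance : R := Finset.univ.sup' Finset.univ_nonempty distance
  have distance_le (x1 : X1) : distance x1 ≤ maxDistance :=
    Finset.le_sup' distance (Finset.mem_univ x1)
  have maxDistance_nonneg : 0 ≤ maxDistance :=
    (Finset.sum_nonneg fun _ _ => abs_nonneg _).trans (distance_le (Classical.arbitrary X1))
  calc ∑ a1', |∑ x1, w x1 * (forwardWiring D f g P1 a1' x1 - forwardWiring D f g P2 a1' x1)|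
    _ ≤ ∑ x1, |w x1| *
          ∑ a1', |forwardWiring D f g P1 a1' x1 - forwardWiring D f g P2 a1' x1| :=
      sum_abs_sum_mul_le _ _ _ _
    _ ≤ ∑ x1, |w x1| * maxDistance := by
      gcongr with x1
      exact (sum_abs_forwardWiring_sub_le hD f g P1 P2 x1).trans (distance_le x1)
    _ = (∑ x1, |w x1|) * maxDistance := (Finset.sum_mul _ _ _).symm
    _ ≤ maxDistance := mul_le_of_le_one_left maxDistance_nonneg hw

end ForwardWiring

/-- Forward-wiring bound: wiring the output of a c-d state into a dice (with deterministic
functions `f`, `g`), applying a general measurement `w` on the device input and comparing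
the resulting distributions gives at most the maximal (over inputs) variational distance
of the original c-d states at the given classical outcome `b`. -/
theorem forward_wiring_bound
    {B A1 X1 A2 X2 A1' : Type} [Fintype B] [Fintype A1] [Fintype X1] [Fintype A2]
    [Fintype X2] [Fintype A1'] [Nonempty X1] [DecidableEq A1']
    (P1 P2 : B → A1 → X1 → ℝ)
    (hP1nonneg : ∀ b a1 x1, 0 ≤ P1 b a1 x1)
    (hP1sum : ∀ x1, ∑ b, ∑ a1, P1 b a1 x1 = 1)
    (hP1ns : ∀ b x1 x1', ∑ a1, P1 b a1 x1 = ∑ a1, P1 b a1 x1')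
    (hP2nonneg : ∀ b a1 x1, 0 ≤ P2 b a1 x1)
    (hP2sum : ∀ x1, ∑ b, ∑ a1, P2 b a1 x1 = 1)
    (hP2ns : ∀ b x1 x1', ∑ a1, P2 b a1 x1 = ∑ a1, P2 b a1 x1')
    (D : A2 → X2 → B → ℝ)
    (hDnonneg : ∀ a2 x2 b, 0 ≤ D a2 x2 b)
    (hDsum : ∀ x2 b, ∑ a2, D a2 x2 b = 1)
    (f : B → A1 → X1 → X2) (g : B → A1 → A2 → X1 → A1')
    (b : B) (w : X1 → ℝ)
    (hwnonneg : ∀ x1, 0 ≤ w x1) (hwsum : ∑ x1, w x1 = 1) :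
    ∑ a1', |∑ x1, w x1 *
        ((∑ a1, ∑ a2, if g b a1 a2 x1 = a1' then P1 b a1 x1 * D a2 (f b a1 x1) b else 0) -
         (∑ a1, ∑ a2, if g b a1 a2 x1 = a1' then P2 b a1 x1 * D a2 (f b a1 x1) b else 0))| ≤
      Finset.univ.sup' Finset.univ_nonempty
        (fun x1 => ∑ a1, |P1 b a1 x1 - P2 b a1 x1|) := by
  exact forward_wiring_bound_general (P1 b) (P2 b) (D := fun a2 x2 => D a2 x2 b)
    (fun x2 => by simp [abs_of_nonneg, hDnonneg, hDsum]) (f b) (g b)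
    (by simp [abs_of_nonneg, hwnonneg, hwsum])
end

section
/- Backward-wiring bound: for any two classical-device states P1, P2 over finite sets B, A1, X1, any dice D(a2|x1,b) with input set X1, any families of deterministic backward-wiring functions {f_b : A2 x X1 -> X1}, {g_b : A1 x A2 x X1 -> A1'}, any fixed b in B, and any probability distribution w on X1 (a general measurement), one has: sum over a1' of | sum over x1 of w(x1) * (Pw1(b,a1'|x1) - Pw2(b,a1'|x1)) | <= max over x1 in X1 of sum over a1 in A1 of |P1(b,a1|x1) - P2(b,a1|x1)|, where Pwi(b,a1'|x1) := sum over (a1,a2) with g_b(a1,a2,x1) = a1' of Pi(b,a1|f_b(a2,x1)) * D(a2|x1,b) for i = 1,2. -/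
/-!
The two wired states differ by the wiring of `P1 - P2`. Once the dice outcome `a2` and the input are
fixed, the wiring only relabels outcomes, so it cannot increase an `ℓ¹`-norm; the dice and the
measurement then merely average over these relabelings. Hence the wired distance is at most an
average of the distances `∑ a1, |P1 - P2|` at the inputs selected by `f`.
-/

open Finset

section WeightedSums

variable {ι κ E : Type*} [SeminormedAddCommGroup E]

theorem sum_norm_sum_fiber_le [Fintype κ] [DecidableEq κ] (s : Finset ι) (h : ι → κ) (v : ι → E) :
    ∑ k, ‖∑ i ∈ s with h i = k, v i‖ ≤ ∑ i ∈ s, ‖v i‖ :=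
  calc
    ∑ k, ‖∑ i ∈ s with h i = k, v i‖ ≤ ∑ k, ∑ i ∈ s with h i = k, ‖v i‖ :=
      sum_le_sum fun _ _ ↦ norm_sum_le _ _
    _ = ∑ i ∈ s, ‖v i‖ := sum_fiberwise s h fun i ↦ ‖v i‖

theorem sum_norm_sum_smul_le [NormedSpace ℝ E] (s : Finset ι) (t : Finset κ) {w : ι → ℝ}
    (hw : ∀ i ∈ s, 0 ≤ w i) (v : κ → ι → E) :
    ∑ k ∈ t, ‖∑ i ∈ s, w i • v k i‖ ≤ ∑ i ∈ s, w i * ∑ k ∈ t, ‖v k i‖ :=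
  calc
    ∑ k ∈ t, ‖∑ i ∈ s, w i • v k i‖ ≤ ∑ k ∈ t, ∑ i ∈ s, w i * ‖v k i‖ :=
      sum_le_sum fun k _ ↦ norm_sum_le_of_le s fun i hi ↦
        (norm_smul_of_nonneg (hw i hi) (v k i)).le
    _ = ∑ i ∈ s, w i * ∑ k ∈ t, ‖v k i‖ := by
      rw [sum_comm]
      simp only [mul_sum]

theorem sum_mul_le_of_forall_le {s : Finset ι} {w r : ι → ℝ} {M : ℝ} (hw : ∀ i ∈ s, 0 ≤ w i)
    (hw_sum : ∑ i ∈ s, w i = 1) (hr : ∀ i ∈ s, r i ≤ M) : ∑ i ∈ s, w i * r i ≤ M :=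
  (convex_Iic M).sum_mem hw hw_sum hr

end WeightedSums

section BackwardWiring

variable {A X A₂ X₂ A' E : Type*} [Fintype A] [Fintype A₂] [DecidableEq A']
  [SeminormedAddCommGroup E] [NormedSpace ℝ E]

/-- The backward wiring of a dice `D` into a device `P` at a fixed classical outcome `b`: on input
`x` the dice is rolled with outcome `a₂`, the device is queried at `f a₂ x`, and its outcome `a` is
relabeled to `g a a₂ x`. Devices take values in a normed space and the dice may have any input set
`X₂`; real-valued devices with `X₂ = X` give the classical-device states. -/
def backwardWiring (D : A₂ → X₂ → ℝ) (f : A₂ → X₂ → X) (g : A → A₂ → X₂ → A') (P : A → X → E)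
    (a' : A') (x : X₂) : E :=
  ∑ p : A × A₂ with g p.1 p.2 x = a', D p.2 x • P p.1 (f p.2 x)

theorem backwardWiring_sub (D : A₂ → X₂ → ℝ) (f : A₂ → X₂ → X) (g : A → A₂ → X₂ → A')
    (P Q : A → X → E) :
    backwardWiring D f g (P - Q) = backwardWiring D f g P - backwardWiring D f g Q := by
  ext a' x
  simp only [backwardWiring, Pi.sub_apply, smul_sub, sum_sub_distrib]

theorem sum_norm_backwardWiring_le [Fintype A'] {D : A₂ → X₂ → ℝ} {x : X₂}
    (hD : ∀ a₂, 0 ≤ D a₂ x) (f : A₂ → X₂ → X) (g : A → A₂ → X₂ → A') (P : A → X → E) :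
    ∑ a', ‖backwardWiring D f g P a' x‖ ≤ ∑ a₂, D a₂ x * ∑ a, ‖P a (f a₂ x)‖ :=
  calc
    ∑ a', ‖backwardWiring D f g P a' x‖ ≤ ∑ p : A × A₂, ‖D p.2 x • P p.1 (f p.2 x)‖ :=
      sum_norm_sum_fiber_le univ _ _
    _ = ∑ a₂, D a₂ x * ∑ a, ‖P a (f a₂ x)‖ := by
      simp only [Fintype.sum_prod_type_right, norm_smul_of_nonneg (hD _), mul_sum]

theorem sum_norm_backwardWiring_le_of_forall_le [Fintype A'] {D : A₂ → X₂ → ℝ} {x : X₂}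
    (hD : ∀ a₂, 0 ≤ D a₂ x) (hD_sum : ∑ a₂, D a₂ x = 1) (f : A₂ → X₂ → X)
    (g : A → A₂ → X₂ → A') {P : A → X → E} {M : ℝ} (hP : ∀ y, ∑ a, ‖P a y‖ ≤ M) :
    ∑ a', ‖backwardWiring D f g P a' x‖ ≤ M :=
  (sum_norm_backwardWiring_le hD f g P).trans <|
    sum_mul_le_of_forall_le (fun a₂ _ ↦ hD a₂) hD_sum fun a₂ _ ↦ hP (f a₂ x)

theorem backward_wiring_bound_general [Fintype A'] [Fintype X₂] {D : A₂ → X₂ → ℝ}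
    (hD : ∀ a₂ x, 0 ≤ D a₂ x) (hD_sum : ∀ x, ∑ a₂, D a₂ x = 1) (f : A₂ → X₂ → X)
    (g : A → A₂ → X₂ → A') {w : X₂ → ℝ} (hw : ∀ x, 0 ≤ w x) (hw_sum : ∑ x, w x = 1)
    {P Q : A → X → E} {M : ℝ} (hPQ : ∀ y, ∑ a, ‖P a y - Q a y‖ ≤ M) :
    ∑ a', ‖∑ x, w x • (backwardWiring D f g P a' x - backwardWiring D f g Q a' x)‖ ≤ M := by
  simp only [← Pi.sub_apply, ← backwardWiring_sub]
  calc
    ∑ a', ‖∑ x, w x • backwardWiring D f g (P - Q) a' x‖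
      ≤ ∑ x, w x * ∑ a', ‖backwardWiring D f g (P - Q) a' x‖ :=
        sum_norm_sum_smul_le univ univ (fun x _ ↦ hw x) _
    _ ≤ M :=
        sum_mul_le_of_forall_le (fun x _ ↦ hw x) hw_sum fun x _ ↦
          sum_norm_backwardWiring_le_of_forall_le (hD · x) (hD_sum x) f g hPQ

end BackwardWiring

/-- Backward-wiring bound: wiring the output of a dice (with input set `X1`) into the
input of a c-d state via deterministic functions `f`, `g`, applying a general
measurement `w` and comparing the resulting distributions gives at most the maximal
(over inputs) variational distance of the original c-d states at the classical
outcome `b`. -/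
theorem backward_wiring_bound
    {B A1 X1 A2 A1' : Type} [Fintype B] [Fintype A1] [Fintype X1] [Fintype A2]
    [Fintype A1'] [Nonempty X1] [DecidableEq A1']
    (P1 P2 : B → A1 → X1 → ℝ)
    (hP1nonneg : ∀ b a1 x1, 0 ≤ P1 b a1 x1)
    (hP1sum : ∀ x1, ∑ b, ∑ a1, P1 b a1 x1 = 1)
    (hP1ns : ∀ b x1 x1', ∑ a1, P1 b a1 x1 = ∑ a1, P1 b a1 x1')
    (hP2nonneg : ∀ b a1 x1, 0 ≤ P2 b a1 x1)
    (hP2sum : ∀ x1, ∑ b, ∑ a1, P2 b a1 x1 = 1)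
    (hP2ns : ∀ b x1 x1', ∑ a1, P2 b a1 x1 = ∑ a1, P2 b a1 x1')
    (D : A2 → X1 → B → ℝ)
    (hDnonneg : ∀ a2 x1 b, 0 ≤ D a2 x1 b)
    (hDsum : ∀ x1 b, ∑ a2, D a2 x1 b = 1)
    (f : B → A2 → X1 → X1) (g : B → A1 → A2 → X1 → A1')
    (b : B) (w : X1 → ℝ)
    (hwnonneg : ∀ x1, 0 ≤ w x1) (hwsum : ∑ x1, w x1 = 1) :
    ∑ a1', |∑ x1, w x1 *
        ((∑ a1, ∑ a2, if g b a1 a2 x1 = a1' then P1 b a1 (f b a2 x1) * D a2 x1 b else 0) -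
         (∑ a1, ∑ a2, if g b a1 a2 x1 = a1' then P2 b a1 (f b a2 x1) * D a2 x1 b else 0))| ≤
      Finset.univ.sup' Finset.univ_nonempty
        (fun x1 => ∑ a1, |P1 b a1 x1 - P2 b a1 x1|) := by
  simpa only [backwardWiring, sum_filter, Fintype.sum_prod_type, smul_eq_mul, Real.norm_eq_abs,
      mul_comm (D _ _ b)] using
    backward_wiring_bound_general (P := P1 b) (Q := P2 b) (fun a2 x1 ↦ hDnonneg a2 x1 b)
      (fun x1 ↦ hDsum x1 b) (f b) (g b) hwnonneg hwsum
      fun x1 ↦ le_sup' (fun x1 ↦ ∑ a1, |P1 b a1 x1 - P2 b a1 x1|) (mem_univ x1)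
end

section
/- For every cc-d distribution P, the NS distance between P and its intermediate state equals the probability that the two key strings differ: D_NS(P, P^int) = Pr[S_A != S_B]. -/
/-- A classical-classical-device (cc-d) distribution over `S_A = S_B = K`, `Q`, `E`
with Eve's input set `Z`: nonnegative, normalized for each `z`, and non-signaling
from Eve's input to the classical part. -/
def IsCCD {K Q E Z : Type} [Fintype K] [Fintype Q] [Fintype E]
    (P : K → K → Q → E → Z → ℝ) : Prop :=
  (∀ sA sB q e z, 0 ≤ P sA sB q e z) ∧
  (∀ z, ∑ sA, ∑ sB, ∑ q, ∑ e, P sA sB q e z = 1) ∧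
  (∀ sA sB q z z', ∑ e, P sA sB q e z = ∑ e, P sA sB q e z')

/-- The NS distance between two cc-d distributions. -/
noncomputable def dNS {K Q E Z : Type} [Fintype K] [Fintype Q] [Fintype E] [Fintype Z]
    [Nonempty Z] (P R : K → K → Q → E → Z → ℝ) : ℝ :=
  (1/2) * ∑ sA, ∑ sB, ∑ q, Finset.univ.sup' Finset.univ_nonempty
    (fun z => ∑ e, |P sA sB q e z - R sA sB q e z|)

/-- The Alice–Eve marginal NS distance between two cc-d distributions. -/
noncomputable def dNSA {K Q E Z : Type} [Fintype K] [Fintype Q] [Fintype E] [Fintype Z]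
    [Nonempty Z] (P R : K → K → Q → E → Z → ℝ) : ℝ :=
  (1/2) * ∑ sA, ∑ q, Finset.univ.sup' Finset.univ_nonempty
    (fun z => ∑ e, |(∑ sB, P sA sB q e z) - (∑ sB, R sA sB q e z)|)

/-- The intermediate state of a cc-d distribution: perfectly correlated keys with the
distribution of Alice's key. -/
noncomputable def interState {K Q E Z : Type} [Fintype K] [DecidableEq K]
    (P : K → K → Q → E → Z → ℝ) : K → K → Q → E → Z → ℝ :=
  fun sA sB q e z => if sA = sB then ∑ s', P sA s' q e z else 0

/-- The ideal state of a cc-d distribution: uniform perfectly correlated keys,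
product with Eve's (and the communication) system. -/
noncomputable def idealState {K Q E Z : Type} [Fintype K] [DecidableEq K]
    (P : K → K → Q → E → Z → ℝ) : K → K → Q → E → Z → ℝ :=
  fun sA sB q e z =>
    (if sA = sB then (1 : ℝ) / (Fintype.card K) else 0) * ∑ sA', ∑ sB', P sA' sB' q e z

/-- The probability that the two key strings differ (computed at Eve's input `z`;
by non-signaling this does not depend on `z`). -/
noncomputable def errProb {K Q E Z : Type} [Fintype K] [Fintype Q] [Fintype E] [DecidableEq K]
    (P : K → K → Q → E → Z → ℝ) (z : Z) : ℝ :=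
  ∑ sA, ∑ sB, ∑ q, ∑ e, if sA = sB then (0 : ℝ) else P sA sB q e z

/-! The difference `P - interState P` has constant sign in Eve's output for fixed `(sA, sB, q)`: it
is nonpositive on the diagonal and nonnegative off it. Absolute values may therefore be taken after
summing over Eve's output, where non-signaling removes the dependence on Eve's input; so the maximum
in the NS distance is over a constant. At a fixed input, the intermediate state moves the mass of
each row `P sA · q e z` to the diagonal, which costs twice the mass lying off the diagonal. -/

open Finset

section FinsetSums

variable {ι G : Type*} [AddCommGroup G] [LinearOrder G] [IsOrderedAddMonoid G]
  {s : Finset ι} {f g : ι → G}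

theorem sum_abs_sub_eq_abs_sub_sum_of_le (h : ∀ i ∈ s, f i ≤ g i) :
    ∑ i ∈ s, |f i - g i| = |∑ i ∈ s, f i - ∑ i ∈ s, g i| := by
  simp_rw [abs_sub_comm (f _), abs_sub_comm (∑ i ∈ s, f i), ← sum_sub_distrib]
  rw [abs_sum_of_nonneg fun i hi => sub_nonneg.2 (h i hi)]
  exact sum_congr rfl fun i hi => abs_of_nonneg (sub_nonneg.2 (h i hi))

theorem sum_abs_sub_single_sum [DecidableEq ι] {i : ι} (hi : i ∈ s) (hf : ∀ j ∈ s, 0 ≤ f j) :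
    ∑ j ∈ s, |f j - (Pi.single i (∑ k ∈ s, f k) : ι → G) j| = 2 • ∑ j ∈ s.erase i, f j := by
  have at_i : |f i - (Pi.single i (∑ k ∈ s, f k) : ι → G) i| = ∑ j ∈ s.erase i, f j := by
    rw [Pi.single_eq_same, ← add_sum_erase s f hi, sub_add_cancel_left, abs_neg,
      abs_sum_of_nonneg fun j hj => hf j (mem_of_mem_erase hj)]
  have off_i : ∀ j ∈ s.erase i, |f j - (Pi.single i (∑ k ∈ s, f k) : ι → G) j| = f j := by
    intro j hj
    rw [Pi.single_eq_of_ne (ne_of_mem_erase hj), sub_zero,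
      abs_of_nonneg (hf j (mem_of_mem_erase hj))]
  rw [← add_sum_erase s _ hi, at_i, sum_congr rfl off_i, two_nsmul]

end FinsetSums

section

variable {K Q E Z : Type}

theorem interState_eq_single [Fintype K] [DecidableEq K] (P : K → K → Q → E → Z → ℝ)
    (sA sB : K) (q : Q) (e : E) (z : Z) :
    interState P sA sB q e z = (Pi.single sA (∑ s', P sA s' q e z) : K → ℝ) sB := by
  simp only [interState, Pi.single_apply, eq_comm]

variable [Fintype E] {P R : K → K → Q → E → Z → ℝ}

/-- The non-signaling condition from Eve's input `z` to the classical part `(sA, sB, q)`. It is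
stated for arbitrary real-valued families, so that it also applies to the absolute difference of
two distributions. -/
def IsNonsignaling (P : K → K → Q → E → Z → ℝ) : Prop :=
  ∀ sA sB q z z', ∑ e, P sA sB q e z = ∑ e, P sA sB q e z'

theorem dNS_eq_half_sum_of_isNonsignaling [Fintype K] [Fintype Q] [Fintype Z] [Nonempty Z]
    (h : IsNonsignaling fun sA sB q e z => |P sA sB q e z - R sA sB q e z|) (z : Z) :
    dNS P R = 1 / 2 * ∑ sA, ∑ sB, ∑ q, ∑ e, |P sA sB q e z - R sA sB q e z| := by
  simp only [dNS, h _ _ _ _ z, sup'_const]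

variable [Fintype K] [DecidableEq K]

theorem isNonsignaling_interState (hP : IsNonsignaling P) : IsNonsignaling (interState P) := by
  intro sA sB q z z'
  obtain rfl | h := eq_or_ne sA sB
  · simp only [interState_eq_single, Pi.single_eq_same, sum_comm (s := univ (α := E)),
      hP _ _ _ z z']
  · simp only [interState_eq_single, Pi.single_eq_of_ne' h]

theorem sum_abs_sub_interState_eq_abs_sub_sum (hP_nonneg : ∀ sA sB q e z, 0 ≤ P sA sB q e z)
    (sA sB : K) (q : Q) (z : Z) :
    ∑ e, |P sA sB q e z - interState P sA sB q e z| =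
      |∑ e, P sA sB q e z - ∑ e, interState P sA sB q e z| := by
  obtain rfl | h := eq_or_ne sA sB
  · refine sum_abs_sub_eq_abs_sub_sum_of_le fun e _ => ?_
    rw [interState_eq_single, Pi.single_eq_same]
    exact single_le_sum (f := fun s' => P sA s' q e z) (fun s' _ => hP_nonneg sA s' q e z)
      (mem_univ sA)
  · simp_rw [abs_sub_comm (P _ _ _ _ _), abs_sub_comm (∑ e, P _ _ _ e _)]
    refine sum_abs_sub_eq_abs_sub_sum_of_le fun e _ => ?_
    rw [interState_eq_single, Pi.single_eq_of_ne' h]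
    exact hP_nonneg sA sB q e z

theorem isNonsignaling_abs_sub_interState (hP_nonneg : ∀ sA sB q e z, 0 ≤ P sA sB q e z)
    (hP : IsNonsignaling P) :
    IsNonsignaling fun sA sB q e z => |P sA sB q e z - interState P sA sB q e z| := by
  intro sA sB q z z'
  simp only [sum_abs_sub_interState_eq_abs_sub_sum hP_nonneg, hP sA sB q z z',
    isNonsignaling_interState hP sA sB q z z']

variable [Fintype Q]

theorem errProb_eq_sum_erase (P : K → K → Q → E → Z → ℝ) (z : Z) :
    errProb P z = ∑ sA, ∑ q, ∑ e, ∑ sB ∈ univ.erase sA, P sA sB q e z := by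
  have row (sA : K) (q : Q) (e : E) :
      ∑ sB, (if sA = sB then 0 else P sA sB q e z) = ∑ sB ∈ univ.erase sA, P sA sB q e z := by
    rw [← sum_erase univ (f := fun sB => if sA = sB then 0 else P sA sB q e z) (if_pos rfl)]
    exact sum_congr rfl fun sB hsB => if_neg (ne_of_mem_erase hsB).symm
  simp only [errProb, sum_comm (s := univ (α := K)) (t := univ (α := Q)),
    sum_comm (s := univ (α := K)) (t := univ (α := E)), row]

theorem sum_abs_sub_interState_eq_two_mul_errProb
    (hP_nonneg : ∀ sA sB q e z, 0 ≤ P sA sB q e z) (z : Z) :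
    ∑ sA, ∑ sB, ∑ q, ∑ e, |P sA sB q e z - interState P sA sB q e z| = 2 * errProb P z := by
  have row (sA : K) (q : Q) (e : E) : ∑ sB, |P sA sB q e z - interState P sA sB q e z| =
      2 * ∑ sB ∈ univ.erase sA, P sA sB q e z := by
    simp only [interState_eq_single]
    rw [sum_abs_sub_single_sum (mem_univ sA) fun sB _ => hP_nonneg sA sB q e z, nsmul_eq_mul,
      Nat.cast_ofNat]
  calc ∑ sA, ∑ sB, ∑ q, ∑ e, |P sA sB q e z - interState P sA sB q e z|
      = ∑ sA, ∑ q, ∑ e, ∑ sB, |P sA sB q e z - interState P sA sB q e z| := by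
        simp only [sum_comm (s := univ (α := K)) (t := univ (α := Q)),
          sum_comm (s := univ (α := K)) (t := univ (α := E))]
    _ = 2 * errProb P z := by
        simp only [row, ← mul_sum, errProb_eq_sum_erase]

theorem dNS_interState_eq_errProb_general [Fintype Z] [Nonempty Z]
    (hP_nonneg : ∀ sA sB q e z, 0 ≤ P sA sB q e z) (hP : IsNonsignaling P) (z : Z) :
    dNS P (interState P) = errProb P z := by
  rw [dNS_eq_half_sum_of_isNonsignaling (isNonsignaling_abs_sub_interState hP_nonneg hP) z,
    sum_abs_sub_interState_eq_two_mul_errProb hP_nonneg]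
  ring

end

/-- The NS distance between a cc-d distribution and its intermediate state equals the
probability that the two key strings differ. -/
theorem dNS_interState_eq_errProb {K Q E Z : Type} [Fintype K] [Fintype Q] [Fintype E]
    [Fintype Z] [Nonempty K] [Nonempty Z] [DecidableEq K]
    (P : K → K → Q → E → Z → ℝ) (hP : IsCCD P) (z : Z) :
    dNS P (interState P) = errProb P z :=
  dNS_interState_eq_errProb_general hP.1 hP.2.2 z
end

section
/- The squashed non-locality is convex with respect to mixtures of devices: if P and R are bipartite non-signaling devices over the same finite sets A, B, X, Y and 0 <= t <= 1, then N_sq(t*P + (1-t)*R) <= t*N_sq(P) + (1-t)*N_sq(R), where (t*P + (1-t)*R)(a,b|x,y) := t*P(a,b|x,y) + (1-t)*R(a,b|x,y). -/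
/-- Shannon entropy (base-2) of a finitely supported real-valued distribution. -/
noncomputable def shannonEnt {α : Type} [Fintype α] (p : α → ℝ) : ℝ :=
  -∑ a, p a * Real.logb 2 (p a)

/-- Shannon mutual information (base-2) of a joint distribution on `α × β`. -/
noncomputable def mutInfo {α β : Type} [Fintype α] [Fintype β] (R : α → β → ℝ) : ℝ :=
  shannonEnt (fun a => ∑ b, R a b) + shannonEnt (fun b => ∑ a, R a b) -
    shannonEnt (fun p : α × β => R p.1 p.2)

/-- A bipartite non-signaling device over finite output sets `A`, `B` and input
sets `X`, `Y`. -/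
def IsDevice {A B X Y : Type} [Fintype A] [Fintype B] (P : A → B → X → Y → ℝ) : Prop :=
  (∀ a b x y, 0 ≤ P a b x y) ∧
  (∀ x y, ∑ a, ∑ b, P a b x y = 1) ∧
  (∀ a x y y', ∑ b, P a b x y = ∑ b, P a b x y') ∧
  (∀ b y x x', ∑ a, P a b x y = ∑ a, P a b x' y)

/-- The set of values `∑_e p_e · I(A:B)_{P_e(·,·|x,y)}` over all (finite) ensembles
`{(p_e, P_e)}` of the device `P` into non-signaling devices. -/
def NsqSet {A B X Y : Type} [Fintype A] [Fintype B]
    (P : A → B → X → Y → ℝ) (x : X) (y : Y) : Set ℝ :=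
  { r | ∃ (n : ℕ) (p : Fin n → ℝ) (Pe : Fin n → A → B → X → Y → ℝ),
      (∀ i, 0 ≤ p i) ∧ (∑ i, p i = 1) ∧ (∀ i, IsDevice (Pe i)) ∧
      (∀ a b x' y', ∑ i, p i * Pe i a b x' y' = P a b x' y') ∧
      r = ∑ i, p i * mutInfo (fun a b => Pe i a b x y) }

/-- The squashed non-locality of a bipartite device: the maximum over inputs `(x,y)` of
the infimum over ensembles of the averaged mutual information at fixed inputs. -/
noncomputable def Nsq {A B X Y : Type} [Fintype A] [Fintype B] [Fintype X] [Fintype Y]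
    [Nonempty X] [Nonempty Y] (P : A → B → X → Y → ℝ) : ℝ :=
  Finset.univ.sup' Finset.univ_nonempty (fun xy : X × Y => sInf (NsqSet P xy.1 xy.2))

/-- A local device, i.e. one admitting a local hidden variable model. -/
def IsLocalDevice {A B X Y : Type} [Fintype A] [Fintype B] (P : A → B → X → Y → ℝ) : Prop :=
  ∃ (n : ℕ) (mu : Fin n → ℝ) (LA : A → X → Fin n → ℝ) (LB : B → Y → Fin n → ℝ),
    (∀ i, 0 ≤ mu i) ∧ (∑ i, mu i = 1) ∧
    (∀ a x i, 0 ≤ LA a x i) ∧ (∀ x i, ∑ a, LA a x i = 1) ∧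
    (∀ b y i, 0 ≤ LB b y i) ∧ (∀ y i, ∑ b, LB b y i = 1) ∧
    (∀ a b x y, P a b x y = ∑ i, mu i * LA a x i * LB b y i)

/-!
Tagging the ensembles by the outcome of a coin of bias `t` turns an ensemble of `P` and an ensemble
of `R` into an ensemble of `t * P + (1 - t) * R` whose average mutual information is the `t`-mixture
of the two averages. Hence, at each pair of inputs, the infimum over the ensembles is convex, and so
is the maximum of these infima over the inputs. By Gibbs' inequality the mutual information is
nonnegative, so these are infima of sets that are bounded below.
-/

open Finset
open scoped Pointwise

section MutualInformation

theorem sub_le_mul_log_div {p q : ℝ} (hp : 0 ≤ p) (hq : 0 ≤ q) (hpq : q = 0 → p = 0) :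
    p - q ≤ p * Real.log (p / q) := by
  obtain rfl | hp := hp.eq_or_lt
  · simpa using hq
  have hq : 0 < q := hq.lt_of_ne' fun h => hp.ne' (hpq h)
  calc p - q = p * (1 - (p / q)⁻¹) := by field_simp
    _ ≤ p * Real.log (p / q) := by
      gcongr
      exact Real.one_sub_inv_le_log_of_pos (by positivity)

theorem sum_mul_logb_div_nonneg {ι : Type*} {s : Finset ι} {p q : ι → ℝ} {c : ℝ} (hc : 1 < c)
    (hp : ∀ i ∈ s, 0 ≤ p i) (hq : ∀ i ∈ s, 0 ≤ q i) (hpq : ∀ i ∈ s, q i = 0 → p i = 0)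
    (hsum : ∑ i ∈ s, q i ≤ ∑ i ∈ s, p i) :
    0 ≤ ∑ i ∈ s, p i * Real.logb c (p i / q i) := by
  have natural_log : 0 ≤ ∑ i ∈ s, p i * Real.log (p i / q i) :=
    calc 0 ≤ ∑ i ∈ s, (p i - q i) := by rwa [sum_sub_distrib, sub_nonneg]
      _ ≤ ∑ i ∈ s, p i * Real.log (p i / q i) :=
        sum_le_sum fun i hi => sub_le_mul_log_div (hp i hi) (hq i hi) (hpq i hi)
  simpa only [Real.logb, mul_div_assoc', ← sum_div] using
    div_nonneg natural_log (Real.log_pos hc).le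

theorem eq_zero_of_marginal_mul_marginal_eq_zero {α β : Type*} [Fintype α] [Fintype β]
    {R : α → β → ℝ} (hR : ∀ a b, 0 ≤ R a b) {a : α} {b : β}
    (h : (∑ b', R a b') * ∑ a', R a' b = 0) : R a b = 0 := by
  rcases mul_eq_zero.1 h with hrow | hcol
  · exact (sum_eq_zero_iff_of_nonneg fun b' _ => hR a b').1 hrow b (mem_univ b)
  · exact (sum_eq_zero_iff_of_nonneg fun a' _ => hR a' b).1 hcol a (mem_univ a)

variable {α β : Type} [Fintype α] [Fintype β] {R : α → β → ℝ}

theorem mutInfo_eq_sum_mul_logb_div (hR : ∀ a b, 0 ≤ R a b) :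
    mutInfo R = ∑ p : α × β,
      R p.1 p.2 * Real.logb 2 (R p.1 p.2 / ((∑ b, R p.1 b) * ∑ a, R a p.2)) := by
  have logb_div_marginals (a : α) (b : β) :
      R a b * Real.logb 2 (R a b / ((∑ b', R a b') * ∑ a', R a' b)) =
        R a b * Real.logb 2 (R a b) - R a b * Real.logb 2 (∑ b', R a b') -
          R a b * Real.logb 2 (∑ a', R a' b) := by
    by_cases hab : R a b = 0
    · simp [hab]
    have hmarg := mt (eq_zero_of_marginal_mul_marginal_eq_zero hR) hab
    rw [Real.logb_div hab hmarg,
      Real.logb_mul (left_ne_zero_of_mul hmarg) (right_ne_zero_of_mul hmarg)]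
    ring
  have sum_col : ∑ a, ∑ b, R a b * Real.logb 2 (∑ a', R a' b) =
      ∑ b, (∑ a, R a b) * Real.logb 2 (∑ a, R a b) := by
    rw [sum_comm]
    simp only [sum_mul]
  simp only [mutInfo, shannonEnt, Fintype.sum_prod_type, logb_div_marginals, sum_sub_distrib,
    sum_col, ← sum_mul]
  ring

theorem mutInfo_nonneg (hR : ∀ a b, 0 ≤ R a b) (hR1 : ∑ a, ∑ b, R a b ≤ 1) :
    0 ≤ mutInfo R := by
  have total_nonneg : 0 ≤ ∑ a, ∑ b, R a b := sum_nonneg fun a _ => sum_nonneg fun b _ => hR a b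
  have sum_marginals_le : ∑ p : α × β, (∑ b, R p.1 b) * ∑ a, R a p.2 ≤ ∑ p : α × β, R p.1 p.2 :=
    calc ∑ p : α × β, (∑ b, R p.1 b) * ∑ a, R a p.2
        = (∑ a, ∑ b, R a b) * ∑ a, ∑ b, R a b := by
          simp only [Fintype.sum_prod_type, ← sum_mul_sum]
          rw [sum_comm (s := (univ : Finset β))]
      _ ≤ ∑ a, ∑ b, R a b := mul_le_of_le_one_left total_nonneg hR1
      _ = ∑ p : α × β, R p.1 p.2 := (Fintype.sum_prod_type fun p : α × β => R p.1 p.2).symm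
  rw [mutInfo_eq_sum_mul_logb_div hR]
  exact sum_mul_logb_div_nonneg one_lt_two (fun p _ => hR p.1 p.2)
    (fun p _ => mul_nonneg (sum_nonneg fun b _ => hR p.1 b) (sum_nonneg fun a _ => hR a p.2))
    (fun _ _ => eq_zero_of_marginal_mul_marginal_eq_zero hR) sum_marginals_le

end MutualInformation

section Ensembles

variable {A B X Y : Type} [Fintype A] [Fintype B] {P R : A → B → X → Y → ℝ}

theorem IsDevice.mutInfo_nonneg (hP : IsDevice P) (x : X) (y : Y) :
    0 ≤ mutInfo fun a b => P a b x y :=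
  _root_.mutInfo_nonneg (fun a b => hP.1 a b x y) (hP.2.1 x y).le

theorem bddBelow_NsqSet (P : A → B → X → Y → ℝ) (x : X) (y : Y) : BddBelow (NsqSet P x y) := by
  refine ⟨0, ?_⟩
  rintro _ ⟨n, p, Pe, hp, -, hPe, -, rfl⟩
  exact sum_nonneg fun i _ => mul_nonneg (hp i) ((hPe i).mutInfo_nonneg x y)

theorem IsDevice.mutInfo_mem_NsqSet (hP : IsDevice P) (x : X) (y : Y) :
    mutInfo (fun a b => P a b x y) ∈ NsqSet P x y :=
  ⟨1, fun _ => 1, fun _ => P, by simp, by simp, fun _ => hP, by simp, by simp⟩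

theorem smul_NsqSet_add_smul_NsqSet_subset {s t : ℝ} (hs : 0 ≤ s) (ht : 0 ≤ t) (hst : s + t = 1)
    (x : X) (y : Y) :
    s • NsqSet P x y + t • NsqSet R x y ⊆
      NsqSet (fun a b x y => s * P a b x y + t * R a b x y) x y := by
  rintro _ ⟨_, ⟨_, ⟨n, p, Pe, hp, hp1, hPe, hPeP, rfl⟩, rfl⟩,
    _, ⟨_, ⟨m, q, Re, hq, hq1, hRe, hReR, rfl⟩, rfl⟩, rfl⟩
  refine ⟨n + m, Fin.append (fun i => s * p i) (fun j => t * q j), Fin.append Pe Re,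
    ?weights_nonneg, ?weights_sum, ?devices, ?mixture, ?value⟩
  case weights_nonneg =>
    refine Fin.addCases (fun i => ?_) (fun j => ?_)
    · simpa using mul_nonneg hs (hp i)
    · simpa using mul_nonneg ht (hq j)
  case weights_sum => simp [Fin.sum_univ_add, ← mul_sum, hp1, hq1, hst]
  case devices =>
    refine Fin.addCases (fun i => ?_) (fun j => ?_)
    · simpa using hPe i
    · simpa using hRe j
  case mixture =>
    intro a b x' y'
    simp [Fin.sum_univ_add, mul_assoc, ← mul_sum, hPeP, hReR]
  case value => simp [Fin.sum_univ_add, mul_assoc, ← mul_sum]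

theorem sInf_NsqSet_mix_le (hP : IsDevice P) (hR : IsDevice R) {s t : ℝ} (hs : 0 ≤ s) (ht : 0 ≤ t)
    (hst : s + t = 1) (x : X) (y : Y) :
    sInf (NsqSet (fun a b x y => s * P a b x y + t * R a b x y) x y) ≤
      s * sInf (NsqSet P x y) + t * sInf (NsqSet R x y) := by
  have nonempty_P : (s • NsqSet P x y).Nonempty :=
    Set.Nonempty.smul_set ⟨_, hP.mutInfo_mem_NsqSet x y⟩
  have nonempty_R : (t • NsqSet R x y).Nonempty :=
    Set.Nonempty.smul_set ⟨_, hR.mutInfo_mem_NsqSet x y⟩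
  calc sInf (NsqSet (fun a b x y => s * P a b x y + t * R a b x y) x y)
      ≤ sInf (s • NsqSet P x y + t • NsqSet R x y) :=
        csInf_le_csInf (bddBelow_NsqSet _ x y) (nonempty_P.add nonempty_R)
          (smul_NsqSet_add_smul_NsqSet_subset hs ht hst x y)
    _ = sInf (s • NsqSet P x y) + sInf (t • NsqSet R x y) :=
        csInf_add nonempty_P ((bddBelow_NsqSet P x y).smul_of_nonneg hs)
          nonempty_R ((bddBelow_NsqSet R x y).smul_of_nonneg ht)
    _ = s * sInf (NsqSet P x y) + t * sInf (NsqSet R x y) := by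
        rw [Real.sInf_smul_of_nonneg hs, Real.sInf_smul_of_nonneg ht, smul_eq_mul, smul_eq_mul]

theorem sInf_NsqSet_le_Nsq [Fintype X] [Fintype Y] [Nonempty X] [Nonempty Y]
    (P : A → B → X → Y → ℝ) (x : X) (y : Y) : sInf (NsqSet P x y) ≤ Nsq P :=
  le_sup' (fun xy : X × Y => sInf (NsqSet P xy.1 xy.2)) (mem_univ (x, y))

end Ensembles

/-- The squashed non-locality is convex with respect to mixtures of devices. -/
theorem Nsq_convex {A B X Y : Type} [Fintype A] [Fintype B] [Fintype X] [Fintype Y]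
    [Nonempty X] [Nonempty Y]
    (P R : A → B → X → Y → ℝ) (hP : IsDevice P) (hR : IsDevice R)
    (t : ℝ) (ht0 : 0 ≤ t) (ht1 : t ≤ 1) :
    Nsq (fun a b x y => t * P a b x y + (1 - t) * R a b x y) ≤
      t * Nsq P + (1 - t) * Nsq R := by
  have h1t : 0 ≤ 1 - t := sub_nonneg.2 ht1
  refine sup'_le _ _ fun ⟨x, y⟩ _ => ?_
  calc sInf (NsqSet (fun a b x y => t * P a b x y + (1 - t) * R a b x y) x y)
      ≤ t * sInf (NsqSet P x y) + (1 - t) * sInf (NsqSet R x y) :=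
        sInf_NsqSet_mix_le hP hR ht0 h1t (add_sub_cancel t 1) x y
    _ ≤ t * Nsq P + (1 - t) * Nsq R := by
        gcongr <;> exact sInf_NsqSet_le_Nsq _ x y
end
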